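/- Let n ≥ 2, let q : ℝ^n_+ → ℝ satisfy the cost-function conditions, let c ∈ ℝ^n_+, let f ∈ L^1_{I−c}(ℝ^n_+) ∩ C(ℝ^n_+), and fix p_0 > 0. Then for every z ∈ ℂ^n with Re z = c, writing s = z_1 + ⋯ + z_n, the Mellin transform in p of the profit function satisfies ∫_{ℝ^n_+} p^{z−I} (Π_q f)(p_0,p) dp = p_0^{s+1} Γ(s+2)^{−1} (Mf)(I−z) · (M e^{−q})(z), where Γ is the Gamma function. -/

import Mathlib

open MeasureTheory Complex Set

noncomputable section

/-- The positive orthant `ℝ^n_+`. -/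
def posOrth (n : ℕ) : Set (Fin n → ℝ) := {x | ∀ i, 0 < x i}

/-- `q` satisfies the cost-function conditions: `C¹` on `ℝ^n_+`, positive,
positively homogeneous of degree one, with bounded level sets. -/
def IsCostFun (n : ℕ) (q : (Fin n → ℝ) → ℝ) : Prop :=
  ContDiffOn ℝ 1 q (posOrth n) ∧
  (∀ x ∈ posOrth n, 0 < q x) ∧
  (∀ lam : ℝ, 0 < lam → ∀ x ∈ posOrth n, q (fun i => lam * x i) = lam * q x) ∧
  (∀ t : ℝ, Bornology.IsBounded {x | x ∈ posOrth n ∧ q x = t})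

/-- The `n`-dimensional Mellin transform `(Mg)(z) = ∫_{ℝ^n_+} x^{z-I} g(x) dx`. -/
def mellinT (n : ℕ) (g : (Fin n → ℝ) → ℝ) (z : Fin n → ℂ) : ℂ :=
  ∫ x in posOrth n, (∏ i, (x i : ℂ) ^ (z i - 1)) * g x

/-- Membership in `L¹_c(ℝ^n_+)`: measurable with `∫ |f| x^{c-I} < ∞`. -/
def MemL1w (n : ℕ) (c : Fin n → ℝ) (f : (Fin n → ℝ) → ℝ) : Prop :=
  IntegrableOn (fun x => f x * ∏ i, x i ^ (c i - 1)) (posOrth n)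

/-- The profit operator `(Π_q f)(p₀, p)`. -/
def Piq (n : ℕ) (q : (Fin n → ℝ) → ℝ) (f : (Fin n → ℝ) → ℝ)
    (p0 : ℝ) (p : Fin n → ℝ) : ℝ :=
  ∫ x in posOrth n, max 0 (p0 - q (fun i => p i * x i)) * f x

/-!
The profit function is the multiplicative convolution `p ↦ ∫ k(p x) f(x) dx` of `f` with the kernel
`k = (p₀ - q)⁺`, so by Fubini and the substitution `y = p x` its Mellin transform is
`(Mf)(I - z) (Mk)(z)`. Homogeneity of `q` gives `M (t - q)⁺ = t^{s+1} M (1 - q)⁺`, and integrating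
`e^{-q} = ∫₀^∞ e^{-t} (t - q)⁺ dt` against `x^{z-I}` turns this into
`M e^{-q} = Γ(s+2) M (1 - q)⁺`. Homogeneity and boundedness of `{q = 1}` confine the support of
`(1 - q)⁺` to a box, on which `x^{z-I}` is integrable because `Re z > 0`.
-/

variable {n : ℕ}

/-- The weight `x^{z-I} = ∏ i, x_i^{z_i - 1}` of the `n`-dimensional Mellin transform. -/
def mellinKernel (z : Fin n → ℂ) (x : Fin n → ℝ) : ℂ := ∏ i, (x i : ℂ) ^ (z i - 1)

/-- Absolute convergence of the integral defining `mellinT n g z`. -/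
def MellinTConvergent (g : (Fin n → ℝ) → ℝ) (z : Fin n → ℂ) : Prop :=
  IntegrableOn (fun x => mellinKernel z x * g x) (posOrth n)

/-- The kernel `(t - q)⁺` of the profit operator: `Piq n q f t p` integrates
`profitKernel q t (p * x) * f x` over `x`. -/
def profitKernel (q : (Fin n → ℝ) → ℝ) (t : ℝ) (y : Fin n → ℝ) : ℝ := max 0 (t - q y)

/-- Positive homogeneity of degree one on the positive orthant; the values of `q` elsewhere are
unconstrained. -/
def IsPosHomogeneous (q : (Fin n → ℝ) → ℝ) : Prop :=
  ∀ t : ℝ, 0 < t → ∀ x ∈ posOrth n, q (t • x) = t * q x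

section PositiveOrthant

variable {a x : Fin n → ℝ}

lemma posOrth_eq_pi_Ioi : posOrth n = univ.pi fun _ => Ioi 0 := by
  ext x
  simp [posOrth]

lemma measurableSet_posOrth : MeasurableSet (posOrth n) := by
  rw [posOrth_eq_pi_Ioi]
  exact .univ_pi fun _ => measurableSet_Ioi

lemma prod_pos_of_mem_posOrth (hx : x ∈ posOrth n) : 0 < ∏ i, x i :=
  Finset.prod_pos fun i _ => hx i

lemma preimage_mul_right_posOrth (ha : a ∈ posOrth n) : (· * a) ⁻¹' posOrth n = posOrth n := by
  ext x
  exact forall_congr' fun i => mul_pos_iff_of_pos_right (ha i)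

lemma measurableEmbedding_mul_right_of_mem_posOrth (ha : a ∈ posOrth n) :
    MeasurableEmbedding (· * a) := by
  have ha_unit : IsUnit a := Pi.isUnit_iff.mpr fun i => (ha i).ne'.isUnit
  exact (measurable_mul_const a).measurableEmbedding ha_unit.mul_left_injective

lemma smul_map_mul_right_restrict_posOrth (ha : a ∈ posOrth n) :
    ENNReal.ofReal (∏ i, a i) • (volume.restrict (posOrth n)).map (· * a) =
      volume.restrict (posOrth n) := by
  have hprod := prod_pos_of_mem_posOrth ha
  have hdiag : ⇑(Matrix.toLin' (Matrix.diagonal a)) = (· * a) := by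
    funext x i
    simp [Matrix.mulVec_diagonal, mul_comm]
  have hvol : ENNReal.ofReal (∏ i, a i) • (volume : Measure (Fin n → ℝ)).map (· * a) = volume := by
    have h := Real.smul_map_diagonal_volume_pi (D := a) (by simpa using hprod.ne')
    rwa [Matrix.det_diagonal, abs_of_pos hprod, hdiag] at h
  nth_rewrite 1 [← preimage_mul_right_posOrth ha]
  rw [← (measurableEmbedding_mul_right_of_mem_posOrth ha).restrict_map, ← Measure.restrict_smul,
    hvol]

lemma setIntegral_posOrth_comp_mul_right {E : Type*} [NormedAddCommGroup E] [NormedSpace ℝ E]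
    (ha : a ∈ posOrth n) (g : (Fin n → ℝ) → E) :
    (∏ i, a i) • ∫ x in posOrth n, g (x * a) = ∫ y in posOrth n, g y := by
  conv_rhs => rw [← smul_map_mul_right_restrict_posOrth ha]
  rw [integral_smul_measure, ENNReal.toReal_ofReal (prod_pos_of_mem_posOrth ha).le,
    (measurableEmbedding_mul_right_of_mem_posOrth ha).integral_map]

lemma integrableOn_posOrth_comp_mul_right {E : Type*} [NormedAddCommGroup E]
    (ha : a ∈ posOrth n) {g : (Fin n → ℝ) → E} (hg : IntegrableOn g (posOrth n)) :
    IntegrableOn (fun x => g (x * a)) (posOrth n) := by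
  rw [IntegrableOn, ← smul_map_mul_right_restrict_posOrth ha,
    integrable_smul_measure (by simpa using prod_pos_of_mem_posOrth ha) ENNReal.ofReal_ne_top,
    (measurableEmbedding_mul_right_of_mem_posOrth ha).integrable_map_iff] at hg
  exact hg

lemma quasiMeasurePreserving_mul_right_posOrth (ha : a ∈ posOrth n) :
    Measure.QuasiMeasurePreserving (· * a) (volume.restrict (posOrth n))
      (volume.restrict (posOrth n)) := by
  refine ⟨measurable_mul_const a, ?_⟩
  conv_rhs => rw [← smul_map_mul_right_restrict_posOrth ha]
  exact Measure.absolutelyContinuous_smul (by simpa using prod_pos_of_mem_posOrth ha)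

lemma quasiMeasurePreserving_mul_posOrth :
    Measure.QuasiMeasurePreserving (fun v : (Fin n → ℝ) × (Fin n → ℝ) => v.1 * v.2)
      ((volume.restrict (posOrth n)).prod (volume.restrict (posOrth n)))
      (volume.restrict (posOrth n)) :=
  QuasiMeasurePreserving.prod_of_left (measurable_fst.mul measurable_snd)
    ((ae_restrict_mem measurableSet_posOrth).mono fun _ => quasiMeasurePreserving_mul_right_posOrth)

end PositiveOrthant

section MellinKernel

variable {z : Fin n → ℂ} {a x : Fin n → ℝ}

lemma cpow_sum {ι : Type*} (s : Finset ι) (w : ι → ℂ) {t : ℂ} (ht : t ≠ 0) :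
    t ^ (∑ i ∈ s, w i) = ∏ i ∈ s, t ^ w i := by
  simp only [Complex.cpow_def_of_ne_zero ht, Finset.mul_sum, Complex.exp_sum]

lemma measurable_mellinKernel (z : Fin n → ℂ) : Measurable (mellinKernel z) := by
  unfold mellinKernel
  fun_prop

lemma mellinKernel_ne_zero (hx : x ∈ posOrth n) : mellinKernel z x ≠ 0 :=
  Finset.prod_ne_zero_iff.mpr fun i _ => by simp [Complex.cpow_eq_zero_iff, (hx i).ne']

lemma norm_mellinKernel (hx : x ∈ posOrth n) :
    ‖mellinKernel z x‖ = ∏ i, x i ^ ((z i).re - 1) := by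
  simp [mellinKernel, norm_prod, Complex.norm_cpow_eq_rpow_re_of_pos (hx _)]

lemma mellinKernel_mul (hx : x ∈ posOrth n) (ha : a ∈ posOrth n) :
    mellinKernel z (x * a) = mellinKernel z x * mellinKernel z a := by
  simp only [mellinKernel, ← Finset.prod_mul_distrib, Pi.mul_apply, Complex.ofReal_mul,
    Complex.mul_cpow_ofReal_nonneg (hx _).le (ha _).le]

lemma prod_mul_mellinKernel_one_sub_mul_mellinKernel (hx : x ∈ posOrth n) :
    ((∏ i, x i : ℝ) : ℂ) * mellinKernel (1 - z) x * mellinKernel z x = 1 := by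
  simp only [mellinKernel, Complex.ofReal_prod, ← Finset.prod_mul_distrib]
  refine Finset.prod_eq_one fun i _ => ?_
  have hxi : (x i : ℂ) ≠ 0 := Complex.ofReal_ne_zero.mpr (hx i).ne'
  calc (x i : ℂ) * (x i : ℂ) ^ ((1 - z) i - 1) * (x i : ℂ) ^ (z i - 1)
      = (x i : ℂ) ^ (1 + ((1 - z) i - 1) + (z i - 1)) := by
        rw [Complex.cpow_add _ _ hxi, Complex.cpow_add _ _ hxi, Complex.cpow_one]
    _ = 1 := by simp [show (1 : ℂ) + -z i + (z i - 1) = 0 by ring]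

lemma mellinKernel_eq_mul_comp_mul_right (ha : a ∈ posOrth n) (hx : x ∈ posOrth n) :
    mellinKernel z x = ((∏ i, a i : ℝ) : ℂ) * mellinKernel (1 - z) a * mellinKernel z (x * a) := by
  rw [mellinKernel_mul hx ha, mul_left_comm, prod_mul_mellinKernel_one_sub_mul_mellinKernel ha,
    mul_one]

lemma mellinKernel_one_sub_const_inv {t : ℝ} (ht : 0 < t) :
    mellinKernel (1 - z) (fun _ => t⁻¹) = (t : ℂ) ^ ∑ i, z i := by
  rw [cpow_sum _ _ (Complex.ofReal_ne_zero.mpr ht.ne')]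
  refine Finset.prod_congr rfl fun i _ => ?_
  have harg : (t : ℂ).arg ≠ Real.pi := by simpa [Complex.arg_ofReal_of_nonneg ht.le] using
    Real.pi_ne_zero.symm
  rw [Complex.ofReal_inv, Complex.inv_cpow _ _ harg, ← Complex.cpow_neg]
  simp

lemma integrableOn_mellinKernel_pi_Ioc (hz : ∀ i, 0 < (z i).re) {R : ℝ} (hR : 0 ≤ R) :
    IntegrableOn (mellinKernel z) (univ.pi fun _ => Ioc 0 R) := by
  rw [IntegrableOn, volume_pi, Measure.restrict_pi_pi]
  refine Integrable.fintype_prod (f := fun i (u : ℝ) => (u : ℂ) ^ (z i - 1)) fun i => ?_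
  rw [← IntegrableOn, ← intervalIntegrable_iff_integrableOn_Ioc_of_le hR]
  exact intervalIntegral.intervalIntegrable_cpow' (by simpa using hz i)

end MellinKernel

section MellinTransform

variable {z : Fin n → ℂ} {f k : (Fin n → ℝ) → ℝ} {a : Fin n → ℝ}

lemma mellinT_eq (k : (Fin n → ℝ) → ℝ) (z : Fin n → ℂ) :
    mellinT n k z = ∫ x in posOrth n, mellinKernel z x * k x := rfl

lemma mellinTConvergent_of_memL1w (hf : MemL1w n (fun i => (z i).re) f) :
    MellinTConvergent f z := by
  have hphase : Measurable fun x => mellinKernel z x / ‖mellinKernel z x‖ :=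
    (measurable_mellinKernel z).div (measurable_mellinKernel z).norm.complex_ofReal
  have hint := hf.ofReal (𝕜 := ℂ) |>.bdd_mul (c := 1) hphase.aestronglyMeasurable
    (ae_of_all _ fun x => by simpa using div_self_le_one _)
  refine IntegrableOn.congr_fun hint (fun x hx => ?_) measurableSet_posOrth
  have hne : (‖mellinKernel z x‖ : ℂ) ≠ 0 := by simpa using mellinKernel_ne_zero hx
  simp only [RCLike.ofReal_mul, ← norm_mellinKernel hx]
  simp only [Complex.coe_algebraMap]
  field_simp

lemma MellinTConvergent.aestronglyMeasurable (hk : MellinTConvergent k z) :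
    AEStronglyMeasurable k (volume.restrict (posOrth n)) := by
  have hmeas : AEStronglyMeasurable
      (fun x => ((mellinKernel z x)⁻¹ * (mellinKernel z x * k x)).re)
      (volume.restrict (posOrth n)) :=
    Complex.continuous_re.comp_aestronglyMeasurable
      ((measurable_mellinKernel z).inv.aestronglyMeasurable.mul hk.1)
  refine hmeas.congr ((ae_restrict_mem measurableSet_posOrth).mono fun x hx => ?_)
  simp [inv_mul_cancel_left₀ (mellinKernel_ne_zero hx)]

lemma mellinKernel_mul_comp_mul_right (ha : a ∈ posOrth n) :
    EqOn (fun x => mellinKernel z x * k (x * a))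
      (fun x => ((∏ i, a i : ℝ) : ℂ) * mellinKernel (1 - z) a *
        (mellinKernel z (x * a) * k (x * a))) (posOrth n) := fun x hx => by
  simp only [mellinKernel_eq_mul_comp_mul_right (z := z) ha hx, mul_assoc]

lemma MellinTConvergent.comp_mul_right (hk : MellinTConvergent k z) (ha : a ∈ posOrth n) :
    MellinTConvergent (fun x => k (x * a)) z :=
  IntegrableOn.congr_fun ((integrableOn_posOrth_comp_mul_right ha hk).const_mul _)
    (mellinKernel_mul_comp_mul_right ha).symm measurableSet_posOrth

lemma MellinTConvergent.const_mul (hk : MellinTConvergent k z) (r : ℝ) :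
    MellinTConvergent (fun x => r * k x) z := by
  refine (Integrable.const_mul hk (r : ℂ)).congr (ae_of_all _ fun x => ?_)
  simp only [Complex.ofReal_mul]
  ring

lemma mellinT_const_mul (r : ℝ) : mellinT n (fun x => r * k x) z = r * mellinT n k z := by
  simp only [mellinT, Complex.ofReal_mul, mul_left_comm _ (r : ℂ), integral_const_mul]

lemma mellinT_comp_mul_right (ha : a ∈ posOrth n) :
    mellinT n (fun x => k (x * a)) z = mellinKernel (1 - z) a * mellinT n k z := by
  calc mellinT n (fun x => k (x * a)) z
      = mellinKernel (1 - z) a *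
          ((∏ i, a i) • ∫ x in posOrth n, mellinKernel z (x * a) * k (x * a)) := by
        rw [mellinT_eq, setIntegral_congr_fun measurableSet_posOrth
          (mellinKernel_mul_comp_mul_right ha), integral_const_mul, Complex.real_smul]
        ring
    _ = mellinKernel (1 - z) a * mellinT n k z := by
        rw [setIntegral_posOrth_comp_mul_right ha fun y => mellinKernel z y * k y, mellinT_eq]

lemma integral_norm_mellinKernel_mul_comp_mul_right (ha : a ∈ posOrth n) :
    ∫ x in posOrth n, ‖mellinKernel z x * k (x * a)‖ =
      ‖mellinKernel (1 - z) a‖ * ∫ x in posOrth n, ‖mellinKernel z x * k x‖ := by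
  calc ∫ x in posOrth n, ‖mellinKernel z x * k (x * a)‖
      = ∫ x in posOrth n, (∏ i, a i) * ‖mellinKernel (1 - z) a‖ *
          ‖mellinKernel z (x * a) * k (x * a)‖ := by
        refine setIntegral_congr_fun measurableSet_posOrth fun x hx => ?_
        have hscale : mellinKernel z x * k (x * a) = _ := mellinKernel_mul_comp_mul_right ha hx
        rw [hscale, norm_mul, norm_mul, Complex.norm_real,
          Real.norm_of_nonneg (prod_pos_of_mem_posOrth ha).le]
    _ = ‖mellinKernel (1 - z) a‖ *
          ((∏ i, a i) • ∫ x in posOrth n, ‖mellinKernel z (x * a) * k (x * a)‖) := by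
        rw [integral_const_mul, smul_eq_mul]
        ring
    _ = ‖mellinKernel (1 - z) a‖ * ∫ x in posOrth n, ‖mellinKernel z x * k x‖ := by
        rw [setIntegral_posOrth_comp_mul_right ha fun y => ‖mellinKernel z y * k y‖]

lemma integrable_mellinKernel_mul_comp_mul (hk : MellinTConvergent k z)
    (hf : MellinTConvergent f (1 - z)) :
    Integrable (fun v : (Fin n → ℝ) × (Fin n → ℝ) =>
        mellinKernel z v.1 * (k (v.1 * v.2) : ℂ) * f v.2)
      ((volume.restrict (posOrth n)).prod (volume.restrict (posOrth n))) := by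
  have hmeas : AEStronglyMeasurable (fun v : (Fin n → ℝ) × (Fin n → ℝ) =>
        mellinKernel z v.1 * (k (v.1 * v.2) : ℂ) * f v.2)
      ((volume.restrict (posOrth n)).prod (volume.restrict (posOrth n))) := by
    have hk_mul := hk.aestronglyMeasurable.comp_quasiMeasurePreserving
      quasiMeasurePreserving_mul_posOrth
    exact ((measurable_mellinKernel z).aestronglyMeasurable.comp_fst.mul
      (Complex.continuous_ofReal.comp_aestronglyMeasurable hk_mul)).mul
      (Complex.continuous_ofReal.comp_aestronglyMeasurable hf.aestronglyMeasurable.comp_snd)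
  rw [integrable_prod_iff' hmeas]
  have hmem := ae_restrict_mem (μ := volume) (measurableSet_posOrth (n := n))
  refine ⟨hmem.mono fun x hx => (hk.comp_mul_right hx).mul_const (f x : ℂ), ?_⟩
  refine (hf.norm.mul_const (∫ y in posOrth n, ‖mellinKernel z y * k y‖)).congr
    (hmem.mono fun x hx => ?_)
  simp only [norm_mul _ (f x : ℂ), integral_mul_const]
  rw [integral_norm_mellinKernel_mul_comp_mul_right hx]
  ring

theorem mellinT_integral_comp_mul (hk : MellinTConvergent k z)
    (hf : MellinTConvergent f (1 - z)) :
    mellinT n (fun p => ∫ x in posOrth n, k (p * x) * f x) z =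
      mellinT n f (1 - z) * mellinT n k z := by
  calc mellinT n (fun p => ∫ x in posOrth n, k (p * x) * f x) z
      = ∫ p in posOrth n, ∫ x in posOrth n, mellinKernel z p * (k (p * x) : ℂ) * f x := by
        simp only [mellinT_eq, ← integral_complex_ofReal, ← integral_const_mul,
          Complex.ofReal_mul, mul_assoc]
    _ = ∫ x in posOrth n, ∫ p in posOrth n, mellinKernel z p * (k (p * x) : ℂ) * f x :=
        integral_integral_swap (integrable_mellinKernel_mul_comp_mul hk hf)
    _ = ∫ x in posOrth n, mellinKernel (1 - z) x * f x * mellinT n k z := by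
        refine setIntegral_congr_fun measurableSet_posOrth fun x hx => ?_
        simp only [integral_mul_const]
        rw [← mellinT_eq (fun p => k (p * x)), mellinT_comp_mul_right hx]
        ring
    _ = mellinT n f (1 - z) * mellinT n k z := integral_mul_const _ _

end MellinTransform

lemma setIntegral_Ioi_exp_neg_mul_max_sub {a : ℝ} (ha : 0 ≤ a) :
    ∫ t in Ioi (0 : ℝ), Real.exp (-t) * max 0 (t - a) = Real.exp (-a) := by
  have hpre : (· - a) ⁻¹' Ioi 0 = Ioi a := by
    ext t
    simp
  calc ∫ t in Ioi (0 : ℝ), Real.exp (-t) * max 0 (t - a)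
      = ∫ t in Ioi a, Real.exp (-t) * max 0 (t - a) := by
        refine setIntegral_eq_of_subset_of_forall_sdiff_eq_zero measurableSet_Ioi
          (Ioi_subset_Ioi ha) fun t ht => ?_
        rw [max_eq_left (sub_nonpos.mpr (not_lt.mp ht.2)), mul_zero]
    _ = ∫ t in Ioi a, Real.exp (-a) * (Real.exp (-(t - a)) * (t - a) ^ ((2 : ℝ) - 1)) := by
        refine setIntegral_congr_fun measurableSet_Ioi fun t (ht : a < t) => ?_
        rw [← mul_assoc, ← Real.exp_add, max_eq_right (sub_pos.mpr ht).le,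
          show (2 : ℝ) - 1 = 1 by norm_num, Real.rpow_one]
        ring_nf
    _ = Real.exp (-a) * ∫ u in Ioi (0 : ℝ), Real.exp (-u) * u ^ ((2 : ℝ) - 1) := by
        rw [integral_const_mul, ← hpre,
          (measurePreserving_sub_right volume a).setIntegral_preimage_emb
            (measurableEmbedding_subRight a) fun u => Real.exp (-u) * u ^ ((2 : ℝ) - 1)]
    _ = Real.exp (-a) := by
        rw [← Real.Gamma_eq_integral two_pos, Real.Gamma_two, mul_one]

section ProfitKernel

variable {q : (Fin n → ℝ) → ℝ} {z : Fin n → ℂ} {t : ℝ}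

lemma exists_forall_le_mul_of_isBounded_level (hpos : ∀ x ∈ posOrth n, 0 < q x)
    (hhom : IsPosHomogeneous q)
    (hbdd : Bornology.IsBounded {x | x ∈ posOrth n ∧ q x = 1}) :
    ∃ R, 0 < R ∧ ∀ x ∈ posOrth n, ∀ i, x i ≤ R * q x := by
  obtain ⟨R, hR, hnorm⟩ := hbdd.exists_pos_norm_le
  refine ⟨R, hR, fun x hx i => ?_⟩
  have hqx := hpos x hx
  have hinv : 0 < (q x)⁻¹ := inv_pos.mpr hqx
  have hlevel : ‖(q x)⁻¹ • x‖ ≤ R :=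
    hnorm _ ⟨fun j => mul_pos hinv (hx j), by rw [hhom _ hinv x hx, inv_mul_cancel₀ hqx.ne']⟩
  have hcoord : (q x)⁻¹ * x i ≤ R :=
    (Real.le_norm_self _).trans ((norm_le_pi_norm ((q x)⁻¹ • x) i).trans hlevel)
  rwa [inv_mul_le_iff₀ hqx, mul_comm] at hcoord

lemma mellinTConvergent_profitKernel_one (hqm : AEMeasurable q (volume.restrict (posOrth n)))
    (hpos : ∀ x ∈ posOrth n, 0 < q x)
    (hhom : IsPosHomogeneous q)
    (hbdd : Bornology.IsBounded {x | x ∈ posOrth n ∧ q x = 1}) (hz : ∀ i, 0 < (z i).re) :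
    MellinTConvergent (profitKernel q 1) z := by
  obtain ⟨R, hR, hle⟩ := exists_forall_le_mul_of_isBounded_level hpos hhom hbdd
  have hbox : (univ.pi fun _ => Ioc 0 R) ⊆ posOrth n := fun x hx i => (hx i trivial).1
  have hbox_meas : MeasurableSet (univ.pi fun _ : Fin n => Ioc (0 : ℝ) R) :=
    .univ_pi fun _ => measurableSet_Ioc
  have hker_meas : AEMeasurable (profitKernel q 1) (volume.restrict (univ.pi fun _ => Ioc 0 R)) :=
    aemeasurable_const.max (aemeasurable_const.sub (hqm.mono_set hbox))
  have hker_le : ∀ x ∈ posOrth n, ‖(profitKernel q 1 x : ℂ)‖ ≤ 1 := fun x hx => by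
    rw [Complex.norm_real, profitKernel, Real.norm_of_nonneg (le_max_left _ _)]
    exact max_le zero_le_one (by linarith [hpos x hx])
  have hint_box : IntegrableOn (fun x => mellinKernel z x * profitKernel q 1 x)
      (univ.pi fun _ => Ioc 0 R) :=
    (integrableOn_mellinKernel_pi_Ioc hz hR.le).mul_bdd
      (Complex.measurable_ofReal.comp_aemeasurable hker_meas).aestronglyMeasurable
      ((ae_restrict_mem hbox_meas).mono fun x hx => hker_le x (hbox hx))
  refine hint_box.of_forall_sdiff_eq_zero measurableSet_posOrth fun x ⟨hx, hx_box⟩ => ?_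
  have hqx : 1 ≤ q x := by
    by_contra! hlt
    exact hx_box fun i _ => ⟨hx i, (hle x hx i).trans (mul_le_of_le_one_right hR.le hlt.le)⟩
  rw [profitKernel, max_eq_left (sub_nonpos.mpr hqx), Complex.ofReal_zero, mul_zero]

lemma eqOn_profitKernel_comp_mul_right (hhom : IsPosHomogeneous q) (ht : 0 < t) :
    EqOn (profitKernel q t) (fun x => t * profitKernel q 1 (x * fun _ => t⁻¹)) (posOrth n) := by
  intro x hx
  have hq_scale : q (x * fun _ => t⁻¹) = t⁻¹ * q x := by
    rw [← hhom _ (inv_pos.mpr ht) x hx]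
    exact congrArg q (mul_comm x _)
  simp only [profitKernel]
  rw [hq_scale, mul_max_of_nonneg _ _ ht.le, mul_zero, mul_sub, mul_one,
    mul_inv_cancel_left₀ ht.ne']

lemma MellinTConvergent.profitKernel_of_one (hhom : IsPosHomogeneous q)
    (hconv : MellinTConvergent (profitKernel q 1) z) (ht : 0 < t) :
    MellinTConvergent (profitKernel q t) z := by
  refine IntegrableOn.congr_fun
    ((hconv.comp_mul_right (a := fun _ => t⁻¹) fun _ => inv_pos.mpr ht).const_mul t)
    (fun x hx => ?_) measurableSet_posOrth
  rw [eqOn_profitKernel_comp_mul_right hhom ht hx]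

lemma mellinT_profitKernel (hhom : IsPosHomogeneous q) (ht : 0 < t) :
    mellinT n (profitKernel q t) z =
      (t : ℂ) ^ ((∑ i, z i) + 1) * mellinT n (profitKernel q 1) z := by
  calc mellinT n (profitKernel q t) z
      = mellinT n (fun x => t * profitKernel q 1 (x * fun _ => t⁻¹)) z :=
        setIntegral_congr_fun measurableSet_posOrth fun x hx => by
          simp only [eqOn_profitKernel_comp_mul_right hhom ht hx]
    _ = t * ((t : ℂ) ^ (∑ i, z i) * mellinT n (profitKernel q 1) z) := by
        rw [mellinT_const_mul, mellinT_comp_mul_right fun _ => inv_pos.mpr ht,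
          mellinKernel_one_sub_const_inv ht]
    _ = (t : ℂ) ^ ((∑ i, z i) + 1) * mellinT n (profitKernel q 1) z := by
        rw [Complex.cpow_add _ _ (Complex.ofReal_ne_zero.mpr ht.ne'), Complex.cpow_one]
        ring

lemma integral_norm_mellinKernel_mul_profitKernel (hhom : IsPosHomogeneous q) (ht : 0 < t) :
    ∫ x in posOrth n, ‖mellinKernel z x * profitKernel q t x‖ =
      ‖(t : ℂ) ^ ((∑ i, z i) + 1)‖ *
        ∫ x in posOrth n, ‖mellinKernel z x * profitKernel q 1 x‖ := by
  calc ∫ x in posOrth n, ‖mellinKernel z x * profitKernel q t x‖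
      = ∫ x in posOrth n, ‖(t : ℂ)‖ *
          ‖mellinKernel z x * profitKernel q 1 (x * fun _ => t⁻¹)‖ :=
        setIntegral_congr_fun measurableSet_posOrth fun x hx => by
          simp only [eqOn_profitKernel_comp_mul_right hhom ht hx, ← norm_mul, Complex.ofReal_mul,
            mul_left_comm]
    _ = ‖(t : ℂ)‖ * (‖(t : ℂ) ^ (∑ i, z i)‖ *
          ∫ x in posOrth n, ‖mellinKernel z x * profitKernel q 1 x‖) := by
        rw [integral_const_mul, integral_norm_mellinKernel_mul_comp_mul_right
          (fun _ => inv_pos.mpr ht), mellinKernel_one_sub_const_inv ht]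
    _ = ‖(t : ℂ) ^ ((∑ i, z i) + 1)‖ *
          ∫ x in posOrth n, ‖mellinKernel z x * profitKernel q 1 x‖ := by
        rw [Complex.cpow_add _ _ (Complex.ofReal_ne_zero.mpr ht.ne'), Complex.cpow_one, norm_mul]
        ring

lemma integrable_mellinKernel_mul_exp_neg_mul_profitKernel
    (hqm : AEMeasurable q (volume.restrict (posOrth n))) (hhom : IsPosHomogeneous q)
    (hconv : MellinTConvergent (profitKernel q 1) z) (hs : 0 < ((∑ i, z i) + 2).re) :
    Integrable (fun v : (Fin n → ℝ) × ℝ =>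
        (Real.exp (-v.2) : ℂ) * (mellinKernel z v.1 * profitKernel q v.2 v.1))
      ((volume.restrict (posOrth n)).prod (volume.restrict (Ioi 0))) := by
  have hmeas : AEStronglyMeasurable (fun v : (Fin n → ℝ) × ℝ =>
        (Real.exp (-v.2) : ℂ) * (mellinKernel z v.1 * profitKernel q v.2 v.1))
      ((volume.restrict (posOrth n)).prod (volume.restrict (Ioi 0))) := by
    have hker : AEMeasurable (fun v : (Fin n → ℝ) × ℝ => profitKernel q v.2 v.1)
        ((volume.restrict (posOrth n)).prod (volume.restrict (Ioi 0))) :=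
      aemeasurable_const.max (measurable_snd.aemeasurable.sub hqm.comp_fst)
    have hexp : Measurable fun v : (Fin n → ℝ) × ℝ => (Real.exp (-v.2) : ℂ) := by fun_prop
    exact (hexp.aemeasurable.mul (((measurable_mellinKernel z).comp measurable_fst).aemeasurable.mul
      (Complex.measurable_ofReal.comp_aemeasurable hker))).aestronglyMeasurable
  rw [integrable_prod_iff' hmeas]
  have hmem := ae_restrict_mem (μ := volume) (measurableSet_Ioi (a := (0 : ℝ)))
  refine ⟨hmem.mono fun t ht =>
    Integrable.const_mul (hconv.profitKernel_of_one hhom ht) (Real.exp (-t) : ℂ), ?_⟩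
  refine ((Complex.GammaIntegral_convergent hs).norm.mul_const
    (∫ x in posOrth n, ‖mellinKernel z x * profitKernel q 1 x‖)).congr (hmem.mono fun t ht => ?_)
  simp only [norm_mul (Real.exp _ : ℂ), integral_const_mul]
  rw [integral_norm_mellinKernel_mul_profitKernel hhom ht, add_sub_assoc, mul_assoc]
  norm_num

lemma mellinT_exp_neg (hqm : AEMeasurable q (volume.restrict (posOrth n)))
    (hnonneg : ∀ x ∈ posOrth n, 0 ≤ q x) (hhom : IsPosHomogeneous q)
    (hconv : MellinTConvergent (profitKernel q 1) z) (hs : 0 < ((∑ i, z i) + 2).re) :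
    mellinT n (fun x => Real.exp (-q x)) z =
      Complex.Gamma ((∑ i, z i) + 2) * mellinT n (profitKernel q 1) z := by
  calc mellinT n (fun x => Real.exp (-q x)) z
      = ∫ x in posOrth n, ∫ t in Ioi (0 : ℝ),
          (Real.exp (-t) : ℂ) * (mellinKernel z x * profitKernel q t x) := by
        refine setIntegral_congr_fun measurableSet_posOrth fun x hx => ?_
        simp only [mul_left_comm _ (mellinKernel z x), integral_const_mul, ← Complex.ofReal_mul,
          integral_complex_ofReal, profitKernel,
          setIntegral_Ioi_exp_neg_mul_max_sub (hnonneg x hx)]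
        rfl
    _ = ∫ t in Ioi (0 : ℝ), ∫ x in posOrth n,
          (Real.exp (-t) : ℂ) * (mellinKernel z x * profitKernel q t x) :=
        integral_integral_swap
          (integrable_mellinKernel_mul_exp_neg_mul_profitKernel hqm hhom hconv hs)
    _ = ∫ t in Ioi (0 : ℝ),
          (Real.exp (-t) : ℂ) * (t : ℂ) ^ ((∑ i, z i) + 2 - 1) *
            mellinT n (profitKernel q 1) z := by
        refine setIntegral_congr_fun measurableSet_Ioi fun t ht => ?_
        rw [integral_const_mul, ← mellinT_eq, mellinT_profitKernel hhom ht, mul_assoc,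
          add_sub_assoc]
        norm_num
    _ = Complex.Gamma ((∑ i, z i) + 2) * mellinT n (profitKernel q 1) z := by
        rw [integral_mul_const, Complex.Gamma_eq_integral hs, Complex.GammaIntegral]

end ProfitKernel

theorem mellin_Piq_eq_general {q f : (Fin n → ℝ) → ℝ} {z : Fin n → ℂ} {p0 : ℝ}
    (hqm : AEMeasurable q (volume.restrict (posOrth n))) (hpos : ∀ x ∈ posOrth n, 0 < q x)
    (hhom : IsPosHomogeneous q) (hbdd : Bornology.IsBounded {x | x ∈ posOrth n ∧ q x = 1})
    (hz : ∀ i, 0 < (z i).re) (hf : MemL1w n (fun i => 1 - (z i).re) f) (hp0 : 0 < p0) :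
    mellinT n (fun p => Piq n q f p0 p) z =
      (p0 : ℂ) ^ ((∑ i, z i) + 1) * (Complex.Gamma ((∑ i, z i) + 2))⁻¹ *
        mellinT n f (fun i => 1 - z i) *
        mellinT n (fun x => Real.exp (-q x)) z := by
  have hconv := mellinTConvergent_profitKernel_one hqm hpos hhom hbdd hz
  have hf_conv : MellinTConvergent f (1 - z) :=
    mellinTConvergent_of_memL1w (by simpa using hf)
  have hs : 0 < ((∑ i, z i) + 2).re := by
    rw [Complex.add_re, Complex.re_sum]
    exact add_pos_of_nonneg_of_pos (Finset.sum_nonneg fun i _ => (hz i).le) two_pos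
  have hgamma : Complex.Gamma ((∑ i, z i) + 2) ≠ 0 := Complex.Gamma_ne_zero_of_re_pos hs
  calc mellinT n (fun p => Piq n q f p0 p) z
      = mellinT n f (1 - z) * mellinT n (profitKernel q p0) z :=
        mellinT_integral_comp_mul (hconv.profitKernel_of_one hhom hp0) hf_conv
    _ = mellinT n f (1 - z) *
          ((p0 : ℂ) ^ ((∑ i, z i) + 1) * mellinT n (profitKernel q 1) z) := by
        rw [mellinT_profitKernel hhom hp0]
    _ = (p0 : ℂ) ^ ((∑ i, z i) + 1) * (Complex.Gamma ((∑ i, z i) + 2))⁻¹ *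
          mellinT n f (1 - z) * mellinT n (fun x => Real.exp (-q x)) z := by
        rw [mellinT_exp_neg hqm (fun x hx => (hpos x hx).le) hhom hconv hs]
        field_simp

/-- Mellin transform of the profit function: for `f ∈ L¹_{I-c}(ℝ^n_+) ∩ C(ℝ^n_+)`,
`p₀ > 0` and every `z` with `Re z = c`, writing `s = z₁ + ⋯ + zₙ`,
`∫_{ℝ^n_+} p^{z-I} (Π_q f)(p₀,p) dp = p₀^{s+1} Γ(s+2)⁻¹ (Mf)(I-z) (M e^{-q})(z)`. -/
theorem mellin_Piq_eq
    (n : ℕ) (hn : 2 ≤ n) (q : (Fin n → ℝ) → ℝ) (hq : IsCostFun n q)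
    (c : Fin n → ℝ) (hc : ∀ i, 0 < c i)
    (f : (Fin n → ℝ) → ℝ) (hf : MemL1w n (fun i => 1 - c i) f)
    (hfc : ContinuousOn f (posOrth n))
    (p0 : ℝ) (hp0 : 0 < p0) :
    ∀ z : Fin n → ℂ, (∀ i, (z i).re = c i) →
      mellinT n (fun p => Piq n q f p0 p) z =
        (p0 : ℂ) ^ ((∑ i, z i) + 1) * (Complex.Gamma ((∑ i, z i) + 2))⁻¹ *
          mellinT n f (fun i => 1 - z i) *
          mellinT n (fun x => Real.exp (-q x)) z := by
  intro z hz
  exact mellin_Piq_eq_general (hq.1.continuousOn.aemeasurable measurableSet_posOrth) hq.2.1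
    hq.2.2.1 (hq.2.2.2 1) (by simpa only [hz] using hc) (by simpa only [hz] using hf) hp0
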